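/- A real γ ∈ (0,1) is d.c.e. and covered by some Solovay test (i.e., is d.c.e. and not Martin-Löf random) if and only if γ is covered by a d.c.e. Solovay test. -/

import Mathlib

open Filter

/-- A computable approximation of a real `α`: a computable sequence of
rationals in `[0,1]` converging to `α`. -/
def IsCompApprox (a : ℕ → ℚ) (α : ℝ) : Prop :=
  Computable a ∧ (∀ s, a s ∈ Set.Icc (0 : ℚ) 1) ∧
    Tendsto (fun s => (a s : ℝ)) atTop (nhds α)

/-- A d.c.e. approximation: a computable approximation with bounded variation. -/
def IsDCEApprox (a : ℕ → ℚ) (α : ℝ) : Prop :=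
  IsCompApprox a α ∧ Summable (fun s => |(a (s + 1) : ℝ) - (a s : ℝ)|)

/-- A computable order: a nondecreasing unbounded computable function. -/
def IsComputableOrder (f : ℕ → ℕ) : Prop :=
  Computable f ∧ Monotone f ∧ Tendsto f atTop atTop

/-- The liminf (in the extended reals) of `|(α - a (f s)) / (α - a s)|`. -/
noncomputable def speedLiminf (a : ℕ → ℚ) (f : ℕ → ℕ) (α : ℝ) : EReal :=
  Filter.liminf (fun s => ((|(α - (a (f s) : ℝ)) / (α - (a s : ℝ))| : ℝ) : EReal)) atTop

/-- A computable approximation `a` of `α` is `ρ`-speedable. -/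
def IsRhoSpeedable (a : ℕ → ℚ) (α : ℝ) (ρ : ℚ) : Prop :=
  (∃ q : ℚ, α = (q : ℝ)) ∨
    ∃ f, IsComputableOrder f ∧ speedLiminf a f α ≤ (((ρ : ℝ) : EReal))

/-- A computable approximation is speedable if it is `ρ`-speedable for some rational
`ρ ∈ [0,1)`. -/
def IsSpeedable (a : ℕ → ℚ) (α : ℝ) : Prop :=
  ∃ ρ : ℚ, 0 ≤ ρ ∧ ρ < 1 ∧ IsRhoSpeedable a α ρ

/-- A Solovay test: computable sequences of rationals `l i ≤ r i` in `[0,1]`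
with `Σ (r i - l i) < ∞`. -/
structure SolovayTest where
  l : ℕ → ℚ
  r : ℕ → ℚ
  comp_l : Computable l
  comp_r : Computable r
  mem_l : ∀ i, l i ∈ Set.Icc (0 : ℚ) 1
  mem_r : ∀ i, r i ∈ Set.Icc (0 : ℚ) 1
  le : ∀ i, l i ≤ r i
  summable : Summable (fun i => (r i : ℝ) - (l i : ℝ))

/-- A real `γ` is covered by a Solovay test if `γ ∈ [l i, r i]` for infinitely many `i`. -/
def SolovayTest.Covers (T : SolovayTest) (γ : ℝ) : Prop :=
  ∃ᶠ i in atTop, γ ∈ Set.Icc (T.l i : ℝ) (T.r i : ℝ)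

/-- The sequence of endpoints `l 0, r 0, l 1, r 1, …` of a Solovay test. -/
def SolovayTest.endpoints (T : SolovayTest) (n : ℕ) : ℚ :=
  if n % 2 = 0 then T.l (n / 2) else T.r (n / 2)

/-- A Solovay test is d.c.e. if its sequence of endpoints has bounded variation. -/
def SolovayTest.IsDCE (T : SolovayTest) : Prop :=
  Summable (fun n => |(T.endpoints (n + 1) : ℝ) - (T.endpoints n : ℝ)|)

/-!
If a d.c.e. test covers `γ`, its left endpoints have bounded variation, hence converge. Since the
lengths of the intervals tend to zero, `γ` is a cluster point of the left endpoints, so it is their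
limit.

Conversely, let `a` be a d.c.e. approximation of an irrational `γ` covered by a test. Start from the
degenerate intervals `[a n, a n]` and replace the `n`-th one by the `i`-th interval of the test
whenever `n` codes a pair `(i, _)` and is the first such stage at which `a n` lies in that interval.
Each new interval contains `a n`, so the variation of the endpoints exceeds that of `a` by at most a
multiple of the total length, and that length is finite because no interval is used twice.
As `γ` is irrational, it is interior to every interval covering it, so all of these are eventually
used. A rational `γ` is covered by the constant test `[γ, γ]`.

The construction has to decide `p ≤ q` on `ℚ`. This is not immediate because the code of a rational
in Mathlib is its rank among all codes of reduced fractions.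
-/

open Encodable

section PrimitiveRecursion

theorem primrecRel_dvd : PrimrecRel fun m n : ℕ => m ∣ n :=
  (Primrec.eq.comp₂ (Primrec.nat_mod.comp₂ Primrec₂.right Primrec₂.left) (Primrec₂.const 0)).of_eq
    fun m n => (Nat.dvd_iff_mod_eq_zero (m := m) (n := n)).symm

theorem findGreatest_dvd_and_dvd (m n : ℕ) :
    Nat.findGreatest (fun k => k ∣ m ∧ k ∣ n) (m + n) = Nat.gcd m n := by
  rcases Nat.eq_zero_or_pos (m + n) with h | h
  · obtain ⟨rfl, rfl⟩ := Nat.add_eq_zero_iff.1 h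
    rfl
  have hpos : 0 < Nat.gcd m n := Nat.gcd_pos_iff.2 (by omega)
  have hle : Nat.gcd m n ≤ m + n :=
    Nat.le_of_dvd h ((Nat.gcd_dvd_left m n).add (Nat.gcd_dvd_right m n))
  refine Nat.findGreatest_eq_iff.2
    ⟨hle, fun _ => ⟨Nat.gcd_dvd_left m n, Nat.gcd_dvd_right m n⟩, fun k hlt _ hk => ?_⟩
  exact hlt.not_ge (Nat.le_of_dvd hpos (Nat.dvd_gcd hk.1 hk.2))

theorem primrec_gcd : Primrec₂ Nat.gcd := by
  have hdvd : PrimrecRel fun (x : ℕ × ℕ) k => k ∣ x.1 ∧ k ∣ x.2 :=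
    (primrecRel_dvd.comp Primrec.snd (Primrec.fst.comp Primrec.fst)).and
      (primrecRel_dvd.comp Primrec.snd (Primrec.snd.comp Primrec.fst))
  exact (Primrec.nat_findGreatest Primrec.nat_add hdvd).of_eq fun x =>
    findGreatest_dvd_and_dvd x.1 x.2

/-- Both `ℤ` and `ℕ ⊕ ℕ` are coded by interleaving, so the equivalence does not change codes. -/
theorem primrec_intEquivNatSumNat : Primrec Equiv.intEquivNatSumNat :=
  Primrec.encode_iff.1 <| Primrec.encode.of_eq fun z => by
    cases z <;> rfl

theorem primrec_int_of_cases {σ : Type*} [Primcodable σ] {f : ℤ → σ}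
    (hofNat : Primrec fun n : ℕ => f n) (hnegSucc : Primrec fun n : ℕ => f (Int.negSucc n)) :
    Primrec f :=
  (Primrec.sumCasesOn primrec_intEquivNatSumNat (hofNat.comp Primrec.snd).to₂
    (hnegSucc.comp Primrec.snd).to₂).of_eq fun z => by cases z <;> rfl

theorem primrec_natAbs : Primrec Int.natAbs :=
  primrec_int_of_cases Primrec.id Primrec.succ

theorem primrec_toNat : Primrec Int.toNat :=
  primrec_int_of_cases Primrec.id (Primrec.const 0)

theorem primrec_neg_toNat : Primrec fun z : ℤ => (-z).toNat :=
  primrec_int_of_cases ((Primrec.const 0).of_eq fun n => by simp) Primrec.succ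

end PrimitiveRecursion

section ComputablePredicates

variable {α β : Type*} [Primcodable α] [Primcodable β]

theorem computablePred_comp {p : β → Prop} {f : α → β} (hp : ComputablePred p)
    (hf : Computable f) : ComputablePred fun a => p (f a) :=
  ComputablePred.computable_of_manyOneReducible ⟨f, hf, fun _ => Iff.rfl⟩ hp

theorem computablePred_and {p q : α → Prop} (hp : ComputablePred p) (hq : ComputablePred q) :
    ComputablePred fun a => p a ∧ q a := by
  classical
  exact Computable.computablePred <|
    (Primrec.and.to_comp.comp hp.decide hq.decide).of_eq fun a => (Bool.decide_and (p a) (q a)).symm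

theorem computablePred_imp {p q : α → Prop} (hp : ComputablePred p) (hq : ComputablePred q) :
    ComputablePred fun a => p a → q a :=
  (computablePred_and hp hq.not).not.of_eq fun _ => by tauto

theorem computablePred_forall_lt {p : α → ℕ → Prop} {f : α → ℕ}
    (hp : ComputablePred fun x : α × ℕ => p x.1 x.2) (hf : Computable f) :
    ComputablePred fun a => ∀ m < f a, p a m := by
  classical
  have hstep : Computable₂ fun (a : α) (x : ℕ × Bool) => x.2 && decide (p a x.1) :=
    Primrec.and.to_comp.comp (Computable.snd.comp Computable.snd)
      (hp.decide.comp (Computable.fst.pair (Computable.fst.comp Computable.snd)))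
  refine Computable.computablePred <|
    (Computable.nat_rec hf (Computable.const true) hstep).of_eq fun a => ?_
  induction f a with
  | zero => simp
  | succ n ih => simp only [ih, Nat.forall_lt_succ_right, Bool.decide_and]

theorem computable_ite {p : α → Prop} [DecidablePred p] {f g : α → β} (hp : ComputablePred p)
    (hf : Computable f) (hg : Computable g) : Computable fun a => if p a then f a else g a :=
  (hp.decide.cond hf hg).of_eq fun a => Bool.cond_decide (p a) (f a) (g a)

end ComputablePredicates

section RationalCoding

theorem computable_subtype_ofNat {s : Set ℕ} [DecidablePred (· ∈ s)] [Infinite s]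
    (hs : ComputablePred (· ∈ s)) : Computable fun n => (Nat.Subtype.ofNat s n : ℕ) := by
  have hnext (x : ℕ) : ∃ m, x + m + 1 ∈ s := by
    obtain ⟨y, hy, hxy⟩ := (Set.infinite_coe_iff.1 ‹Infinite s›).exists_gt x
    obtain ⟨m, rfl⟩ := Nat.exists_eq_add_of_lt hxy
    exact ⟨m, hy⟩
  have hfind : Computable fun x => Nat.find (hnext x) :=
    Computable.find (P := fun x m => x + m + 1 ∈ s)
      (computablePred_comp hs (Computable.succ.comp Primrec.nat_add.to_comp)) hnext
  have hsucc : Computable fun x => x + Nat.find (hnext x) + 1 :=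
    Computable.succ.comp (Primrec.nat_add.to_comp.comp Computable.id hfind)
  refine (Computable.nat_rec Computable.id (Computable.const (Nat.Subtype.ofNat s 0 : ℕ))
    (hsucc.comp (Computable.snd.comp Computable.snd)).to₂).of_eq fun n => ?_
  induction n with
  | zero => rfl
  | succ n ih =>
    simp only [id] at ih ⊢
    rw [ih]
    rfl

/-- `Denumerable.ofEncodableOfInfinite` replaces every code by its rank among all codes; the
original code is recovered by enumerating the codes in increasing order. -/
theorem computable_encode_ofEncodableOfInfinite {α : Type*} [e : Encodable α] [Infinite α]
    (h : ComputablePred (· ∈ Set.range e.encode)) :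
    @Computable α ℕ (@Primcodable.ofDenumerable α (Denumerable.ofEncodableOfInfinite α)) _
      e.encode := by
  let := decidableRangeEncode α
  have : Infinite (Set.range e.encode) :=
    Infinite.of_injective _ (Equiv.ofInjective _ e.encode_injective).injective
  let := Denumerable.ofEncodableOfInfinite α
  have hofNat (n : ℕ) :
      e.encode (Denumerable.ofNat α n) = (Nat.Subtype.ofNat (Set.range e.encode) n : ℕ) :=
    congrArg Subtype.val ((equivRangeEncode α).apply_symm_apply (Nat.Subtype.ofNat _ n))
  exact ((computable_subtype_ofNat h).comp Computable.encode).of_eq fun a => by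
    rw [← hofNat, Denumerable.ofNat_encode]

theorem encode_rat (q : ℚ) : Rat.instEncodable.encode q = Nat.pair (encode q.num) q.den := rfl

theorem mem_range_encode_rat {n : ℕ} :
    n ∈ Set.range Rat.instEncodable.encode ↔
      0 < n.unpair.2 ∧ Nat.gcd (Denumerable.ofNat ℤ n.unpair.1).natAbs n.unpair.2 = 1 := by
  constructor
  · rintro ⟨q, rfl⟩
    simp only [encode_rat, Nat.unpair_pair, Denumerable.ofNat_encode]
    exact ⟨q.pos, q.reduced⟩
  · rintro ⟨hpos, hcoprime⟩
    refine ⟨⟨Denumerable.ofNat ℤ n.unpair.1, n.unpair.2, hpos.ne', hcoprime⟩, ?_⟩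
    rw [encode_rat, Denumerable.encode_ofNat, Nat.pair_unpair]

theorem computable_encode_rat : Computable Rat.instEncodable.encode := by
  have hden : Primrec fun n : ℕ => n.unpair.2 := Primrec.snd.comp Primrec.unpair
  have hnum : Primrec fun n : ℕ => (Denumerable.ofNat ℤ n.unpair.1).natAbs :=
    primrec_natAbs.comp ((Primrec.ofNat ℤ).comp (Primrec.fst.comp Primrec.unpair))
  have hrange : PrimrecPred (· ∈ Set.range Rat.instEncodable.encode) :=
    ((Primrec.nat_lt.comp (Primrec.const 0) hden).and
      (Primrec.eq.comp (primrec_gcd.comp hnum hden) (Primrec.const 1))).of_eq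
        fun _ => mem_range_encode_rat.symm
  exact computable_encode_ofEncodableOfInfinite hrange.computablePred

theorem computable_num : Computable Rat.num :=
  Computable.encode_iff.1 <|
    (Computable.fst.comp (Computable.unpair.comp computable_encode_rat)).of_eq fun q => by
      simp [encode_rat]

theorem computable_den : Computable Rat.den :=
  (Computable.snd.comp (Computable.unpair.comp computable_encode_rat)).of_eq fun q => by
    simp [encode_rat]

theorem rat_le_iff_toNat (p q : ℚ) :
    p ≤ q ↔ p.num.toNat * q.den + (-q.num).toNat * p.den ≤
      q.num.toNat * p.den + (-p.num).toNat * q.den := by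
  rw [Rat.le_iff]
  zify
  rw [← sub_nonneg, ← sub_nonneg (b := _ + _)]
  nth_rw 1 [← Int.toNat_sub_toNat_neg p.num, ← Int.toNat_sub_toNat_neg q.num]
  ring_nf

theorem computablePred_rat_le : ComputablePred fun x : ℚ × ℚ => x.1 ≤ x.2 := by
  have hpos : Computable₂ fun p q : ℚ => p.num.toNat * q.den :=
    Primrec.nat_mul.to_comp.comp
      (primrec_toNat.to_comp.comp (computable_num.comp Computable.fst))
      (computable_den.comp Computable.snd)
  have hneg : Computable₂ fun p q : ℚ => (-p.num).toNat * q.den :=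
    Primrec.nat_mul.to_comp.comp
      (primrec_neg_toNat.to_comp.comp (computable_num.comp Computable.fst))
      (computable_den.comp Computable.snd)
  have hlhs := Primrec.nat_add.to_comp.comp hpos (hneg.comp Computable.snd Computable.fst)
  have hrhs := Primrec.nat_add.to_comp.comp (hpos.comp Computable.snd Computable.fst) hneg
  exact (computablePred_comp Primrec.nat_le.computablePred (hlhs.pair hrhs)).of_eq
    fun x => (rat_le_iff_toNat x.1 x.2).symm

end RationalCoding

section FirstInFiber

variable {α β : Type*}

/-- `a` is the first element of its fiber under `κ` that satisfies `p`. Keeping only such elements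
selects at most one representative of each fiber. -/
def IsFirstInFiber [LT α] (κ : α → β) (p : α → Prop) (a : α) : Prop :=
  p a ∧ ∀ b < a, κ b = κ a → ¬ p b

theorem injOn_isFirstInFiber [LinearOrder α] (κ : α → β) (p : α → Prop) :
    Set.InjOn κ {a | IsFirstInFiber κ p a} := by
  intro a ha b hb hab
  rcases lt_trichotomy a b with hlt | heq | hlt
  · exact absurd ha.1 (hb.2 a hlt hab)
  · exact heq
  · exact absurd hb.1 (ha.2 b hlt hab.symm)

theorem exists_isFirstInFiber [LT α] [WellFoundedLT α] {κ : α → β} {p : α → Prop} {a : α}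
    (ha : p a) : ∃ b, κ b = κ a ∧ IsFirstInFiber κ p b := by
  obtain ⟨b, ⟨hκ, hb⟩, hmin⟩ :=
    wellFounded_lt.has_min {b | κ b = κ a ∧ p b} ⟨a, rfl, ha⟩
  exact ⟨b, hκ, hb, fun c hlt hc hpc => hmin c ⟨hc.trans hκ, hpc⟩ hlt⟩

theorem computablePred_isFirstInFiber [Primcodable β] {κ : ℕ → β} {p : ℕ → Prop}
    (hκ : Computable κ) (hp : ComputablePred p) : ComputablePred (IsFirstInFiber κ p) := by
  have heq : ComputablePred fun x : ℕ × ℕ => κ x.2 = κ x.1 :=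
    computablePred_comp Primrec.eq.computablePred
      ((hκ.comp Computable.snd).pair (hκ.comp Computable.fst))
  have hnot : ComputablePred fun x : ℕ × ℕ => ¬ p x.2 := (computablePred_comp hp Computable.snd).not
  exact computablePred_and hp (computablePred_forall_lt (computablePred_imp heq hnot) Computable.id)

end FirstInFiber

section BoundedVariation

theorem summable_nat_iff_even_odd {E : Type*} [AddCommGroup E] [UniformSpace E]
    [IsUniformAddGroup E] [CompleteSpace E] {f : ℕ → E} :
    Summable f ↔ (Summable fun n => f (2 * n)) ∧ Summable fun n => f (2 * n + 1) := by
  have hodd : Function.Injective fun n : ℕ => 2 * n + 1 := fun m n hmn => by simpa using hmn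
  exact ⟨fun h => ⟨h.comp_injective (mul_right_injective₀ two_ne_zero), h.comp_injective hodd⟩,
    fun h => h.1.even_add_odd h.2⟩

variable {ι E : Type*} [PseudoMetricSpace E]

theorem summable_dist_congr {u u' v v' : ι → E} (hu : Summable fun i => dist (u i) (u' i))
    (hv : Summable fun i => dist (v i) (v' i)) :
    (Summable fun i => dist (u i) (v i)) ↔ Summable fun i => dist (u' i) (v' i) :=
  ⟨fun h => .of_nonneg_of_le (fun _ => dist_nonneg) (fun _ => dist_triangle4_left _ _ _ _)
      (h.add (hu.add hv)),
    fun h => .of_nonneg_of_le (fun _ => dist_nonneg) (fun _ => dist_triangle4_right _ _ _ _)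
      ((hu.add hv).add h)⟩

theorem summable_dist_succ_congr {f g : ℕ → E} (h : Summable fun n => dist (f n) (g n)) :
    (Summable fun n => dist (f (n + 1)) (f n)) ↔ Summable fun n => dist (g (n + 1)) (g n) :=
  summable_dist_congr ((summable_nat_add_iff (f := fun n => dist (f n) (g n)) 1).2 h) h

end BoundedVariation

section RationalApproximation

theorem eventually_mem_Icc_of_tendsto_irrational {ι : Type*} {f : Filter ι} {a : ι → ℚ} {γ : ℝ}
    {l r : ℚ} (ha : Tendsto (fun i => (a i : ℝ)) f (nhds γ)) (hirr : Irrational γ)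
    (hγ : γ ∈ Set.Icc (l : ℝ) r) : ∀ᶠ i in f, a i ∈ Set.Icc l r := by
  have hl : (l : ℝ) < γ := hγ.1.lt_of_ne (hirr.ne_rat l).symm
  have hr : γ < r := hγ.2.lt_of_ne (hirr.ne_rat r)
  filter_upwards [ha.eventually_const_lt hl, ha.eventually_lt_const hr] with i hli hir
  exact ⟨mod_cast hli.le, mod_cast hir.le⟩

end RationalApproximation

namespace SolovayTest

variable {T : SolovayTest} {γ : ℝ}

theorem cast_le (T : SolovayTest) (n : ℕ) : (T.l n : ℝ) ≤ T.r n := mod_cast T.le n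

theorem endpoints_two_mul (T : SolovayTest) (n : ℕ) : T.endpoints (2 * n) = T.l n := by
  simp [endpoints]

theorem endpoints_two_mul_add_one (T : SolovayTest) (n : ℕ) :
    T.endpoints (2 * n + 1) = T.r n := by
  simp [endpoints, Nat.mul_add_div]

theorem summable_dist (T : SolovayTest) : Summable fun n => dist (T.r n : ℝ) (T.l n) :=
  T.summable.congr fun n => (abs_of_nonneg (sub_nonneg.2 (T.cast_le n))).symm

theorem isDCE_iff_summable_gaps :
    T.IsDCE ↔ Summable fun n => |(T.l (n + 1) : ℝ) - T.r n| := by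
  have hlength : Summable fun n => |(T.r n : ℝ) - T.l n| := T.summable_dist
  have hnext (n : ℕ) : T.endpoints (2 * n + 1 + 1) = T.l (n + 1) := T.endpoints_two_mul (n + 1)
  rw [IsDCE, summable_nat_iff_even_odd]
  simp only [hnext, endpoints_two_mul, endpoints_two_mul_add_one, hlength, true_and]

theorem isDCE_iff_summable_left :
    T.IsDCE ↔ Summable fun n => |(T.l (n + 1) : ℝ) - T.l n| := by
  have hself : Summable fun n => dist (T.l (n + 1) : ℝ) (T.l (n + 1)) := by
    simp only [dist_self, summable_zero]
  exact isDCE_iff_summable_gaps.trans (summable_dist_congr hself T.summable_dist)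

theorem isDCE_of_forall_mem_Icc {a : ℕ → ℝ} (hmem : ∀ n, a n ∈ Set.Icc (T.l n : ℝ) (T.r n))
    (hvar : Summable fun n => |a (n + 1) - a n|) : T.IsDCE := by
  have hdist : Summable fun n => dist (a n) (T.l n) :=
    .of_nonneg_of_le (fun _ => dist_nonneg)
      (fun n => Real.dist_le_of_mem_Icc (hmem n) (Set.left_mem_Icc.2 (T.cast_le n))) T.summable
  exact isDCE_iff_summable_left.2 ((summable_dist_succ_congr hdist).1 hvar)

theorem Covers.mapClusterPt_left (hγ : T.Covers γ) :
    MapClusterPt γ atTop fun n => (T.l n : ℝ) := by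
  refine Metric.nhds_basis_ball.mapClusterPt_iff_frequently.2 fun ε hε => ?_
  have hshort : ∀ᶠ n in atTop, (T.r n : ℝ) - T.l n < ε :=
    T.summable.tendsto_atTop_zero.eventually_lt_const hε
  refine (hγ.and_eventually hshort).mono fun n ⟨hmem, hlt⟩ => ?_
  exact (Real.dist_le_of_mem_Icc (Set.left_mem_Icc.2 (T.cast_le n)) hmem).trans_lt hlt

theorem Covers.isDCEApprox_left (hγ : T.Covers γ) (hT : T.IsDCE) : IsDCEApprox T.l γ := by
  have hvar := isDCE_iff_summable_left.1 hT
  have hcauchy : CauchySeq fun n => (T.l n : ℝ) :=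
    cauchySeq_of_summable_dist (hvar.congr fun n => (dist_comm (T.l n : ℝ) (T.l (n + 1))).symm)
  exact ⟨⟨T.comp_l, T.mem_l, le_nhds_of_cauchy_adhp hcauchy hγ.mapClusterPt_left⟩, hvar⟩

/-- The Solovay test all of whose intervals are `[q, q]`. It handles rational reals, which may be
covered only at endpoints that an approximation never reaches. -/
def const (q : ℚ) (hq : q ∈ Set.Icc (0 : ℚ) 1) : SolovayTest where
  l _ := q
  r _ := q
  comp_l := Computable.const q
  comp_r := Computable.const q
  mem_l _ := hq
  mem_r _ := hq
  le _ := le_rfl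
  summable := by simp [summable_zero]

theorem isDCE_const (q : ℚ) (hq : q ∈ Set.Icc (0 : ℚ) 1) : (const q hq).IsDCE :=
  isDCE_iff_summable_left.2 (by simp [const, summable_zero])

theorem covers_const (q : ℚ) (hq : q ∈ Set.Icc (0 : ℚ) 1) : (const q hq).Covers q :=
  .of_forall fun _ => by simp [const]

section Splice

variable (T) {a : ℕ → ℚ} {s : ℕ → Prop} [DecidablePred s] {κ : ℕ → ℕ}
  (ha : Computable a) (hmem : ∀ n, a n ∈ Set.Icc (0 : ℚ) 1) (hs : ComputablePred s)
  (hκ : Computable κ) (hinj : Set.InjOn κ {n | s n})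

/-- The Solovay test whose `n`-th interval is interval `κ n` of `T` at the stages `n` selected by
`s`, and the degenerate interval `[a n, a n]` at all others. -/
def splice : SolovayTest where
  l n := if s n then T.l (κ n) else a n
  r n := if s n then T.r (κ n) else a n
  comp_l := computable_ite hs (T.comp_l.comp hκ) ha
  comp_r := computable_ite hs (T.comp_r.comp hκ) ha
  mem_l n := by split_ifs <;> [exact T.mem_l _; exact hmem n]
  mem_r n := by split_ifs <;> [exact T.mem_r _; exact hmem n]
  le n := by split_ifs <;> [exact T.le _; exact le_rfl]
  summable := by
    let length (n : ℕ) : ℝ := T.r (κ n) - T.l (κ n)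
    have hselected : Summable (length ∘ ((↑) : {n | s n} → ℕ)) :=
      T.summable.comp_injective hinj.injective
    refine (summable_subtype_iff_indicator.1 hselected).congr fun n => ?_
    by_cases hn : s n <;> simp [hn, length]

theorem mem_Icc_splice (hit : ∀ n, s n → a n ∈ Set.Icc (T.l (κ n)) (T.r (κ n))) (n : ℕ) :
    (a n : ℝ) ∈ Set.Icc ((T.splice ha hmem hs hκ hinj).l n : ℝ)
      ((T.splice ha hmem hs hκ hinj).r n) := by
  by_cases hn : s n
  · simpa [splice, hn] using hit n hn
  · simp [splice, hn]

theorem covers_splice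
    (h : ∃ᶠ i in atTop, γ ∈ Set.Icc (T.l i : ℝ) (T.r i) ∧ ∃ n, s n ∧ κ n = i) :
    (T.splice ha hmem hs hκ hinj).Covers γ := by
  rw [Covers, Nat.frequently_atTop_iff_infinite] at *
  refine .of_image κ (h.mono ?_)
  rintro _ ⟨hγ, n, hn, rfl⟩
  exact ⟨n, by simpa [splice, hn] using hγ, rfl⟩

end Splice

section Hits

variable (T) (a : ℕ → ℚ)

/-- The approximation `a` hits `T` at stage `n` if `a n` lies in the interval of `T` with index
`n.unpair.1`. Indexing stages by pairs lets every interval be tested at infinitely many stages. -/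
def Hits (n : ℕ) : Prop :=
  a n ∈ Set.Icc (T.l n.unpair.1) (T.r n.unpair.1)

variable {a}

theorem computablePred_hits (ha : Computable a) : ComputablePred (T.Hits a) := by
  have hindex : Computable fun n : ℕ => n.unpair.1 := Computable.fst.comp Computable.unpair
  exact computablePred_and
    (computablePred_comp computablePred_rat_le ((T.comp_l.comp hindex).pair ha))
    (computablePred_comp computablePred_rat_le (ha.pair (T.comp_r.comp hindex)))

variable {T}

theorem exists_hits {i : ℕ} (h : ∀ᶠ n in atTop, a n ∈ Set.Icc (T.l i) (T.r i)) :
    ∃ n, n.unpair.1 = i ∧ T.Hits a n := by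
  obtain ⟨N, hN⟩ := eventually_atTop.1 h
  exact ⟨Nat.pair i N, by simp, by simpa [Hits] using hN _ (Nat.right_le_pair i N)⟩

end Hits

end SolovayTest

theorem IsDCEApprox.exists_isDCE_covers {a : ℕ → ℚ} {γ : ℝ} {T : SolovayTest}
    (ha : IsDCEApprox a γ) (hirr : Irrational γ) (hT : T.Covers γ) :
    ∃ T' : SolovayTest, T'.IsDCE ∧ T'.Covers γ := by
  classical
  obtain ⟨⟨hcomp, hmem, hlim⟩, hvar⟩ := ha
  let index (n : ℕ) : ℕ := n.unpair.1
  have hindex : Computable index := Computable.fst.comp Computable.unpair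
  have hfirst : ComputablePred (IsFirstInFiber index (T.Hits a)) :=
    computablePred_isFirstInFiber hindex (T.computablePred_hits hcomp)
  have hinj := injOn_isFirstInFiber index (T.Hits a)
  refine ⟨T.splice hcomp hmem hfirst hindex hinj, ?_, ?_⟩
  · exact SolovayTest.isDCE_of_forall_mem_Icc
      (T.mem_Icc_splice hcomp hmem hfirst hindex hinj fun n hn => hn.1) hvar
  · refine T.covers_splice hcomp hmem hfirst hindex hinj (hT.mono fun i hi => ⟨hi, ?_⟩)
    obtain ⟨m, rfl, hm⟩ :=
      SolovayTest.exists_hits (eventually_mem_Icc_of_tendsto_irrational hlim hirr hi)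
    obtain ⟨n, hn, hfirst_n⟩ := exists_isFirstInFiber (κ := index) hm
    exact ⟨n, hfirst_n, hn⟩

theorem dce_nonrandom_iff_covered_by_dce_test (γ : ℝ)
    (hγ : γ ∈ Set.Ioo (0 : ℝ) 1) :
    ((∃ a : ℕ → ℚ, IsDCEApprox a γ) ∧ ∃ T : SolovayTest, T.Covers γ) ↔
      ∃ T : SolovayTest, T.IsDCE ∧ T.Covers γ := by
  constructor
  · rintro ⟨⟨a, ha⟩, T, hT⟩
    by_cases hirr : Irrational γ
    · exact ha.exists_isDCE_covers hirr hT
    · obtain ⟨q, rfl⟩ := not_not.1 hirr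
      have hq : q ∈ Set.Icc (0 : ℚ) 1 := ⟨mod_cast hγ.1.le, mod_cast hγ.2.le⟩
      exact ⟨.const q hq, SolovayTest.isDCE_const q hq, SolovayTest.covers_const q hq⟩
  · rintro ⟨T, hT, hcov⟩
    exact ⟨⟨T.l, hcov.isDCEApprox_left hT⟩, T, hcov⟩
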